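/- arXiv:2009.07196 — 7 statements merged into one kernel-verified Lean document; each statement's English description precedes it below -/
import Mathlib

section
/- Let H ∈ {0,1}^{n×k} be a partition indicator matrix of an externally equitable partition (EEP) of a symmetric matrix A ∈ ℝ^{n×n} with nonnegative entries, i.e. L H = H L^π where L = diag(A·1) − A and L^π = H† L H. Let ΔA ∈ ℝ^{n×n} be a symmetric matrix with nonnegative entries such that ΔA_{ij} = 0 whenever nodes i and j belong to different groups of H (ΔA adds only within-group edges). Then the quotient Laplacian is unchanged: H† (diag((A+ΔA)·1) − (A+ΔA)) H = H† (diag(A·1) − A) H. -/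
open Matrix BigOperators

/-- If `H` is the indicator matrix of an externally equitable partition (EEP)
of a symmetric nonnegative matrix `A` (i.e. `L H = H L^π` with `L = diag(A·1) − A` and
`L^π = H† L H`), and `ΔA` is a symmetric nonnegative matrix adding only within-group edges,
then the quotient Laplacian is unchanged. -/
theorem quotient_laplacian_invariant_under_within_group_edges
    {n k : ℕ} (g : Fin n → Fin k) (hg : Function.Surjective g)
    (H : Matrix (Fin n) (Fin k) ℝ)
    (hH : H = Matrix.of fun i j => if g i = j then (1 : ℝ) else 0)
    (Hdag : Matrix (Fin k) (Fin n) ℝ) (hHdag : Hdag = (Hᵀ * H)⁻¹ * Hᵀ)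
    (A : Matrix (Fin n) (Fin n) ℝ) (hAsymm : A.IsSymm) (hAnn : ∀ i j, 0 ≤ A i j)
    (L : Matrix (Fin n) (Fin n) ℝ)
    (hL : L = Matrix.diagonal (fun i => ∑ j, A i j) - A)
    (hEEP : L * H = H * (Hdag * L * H))
    (ΔA : Matrix (Fin n) (Fin n) ℝ) (hΔsymm : ΔA.IsSymm) (hΔnn : ∀ i j, 0 ≤ ΔA i j)
    (hΔwithin : ∀ i j, g i ≠ g j → ΔA i j = 0) :
    Hdag * (Matrix.diagonal (fun i => ∑ j, (A + ΔA) i j) - (A + ΔA)) * H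
      = Hdag * (Matrix.diagonal (fun i => ∑ j, A i j) - A) * H := by
  have key : (Matrix.diagonal (fun i => ∑ j, ΔA i j) - ΔA) * H = 0 := by
    ext i c
    rw [Matrix.sub_mul, Matrix.sub_apply, Matrix.diagonal_mul, Matrix.mul_apply,
      Finset.sum_mul, ← Finset.sum_sub_distrib]
    refine Finset.sum_eq_zero fun j _ => ?_
    by_cases h : g i = g j
    · simp [hH, h]
    · simp [hΔwithin i j h]
  have split : Matrix.diagonal (fun i => ∑ j, (A + ΔA) i j) - (A + ΔA)
      = (Matrix.diagonal (fun i => ∑ j, A i j) - A)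
        + (Matrix.diagonal (fun i => ∑ j, ΔA i j) - ΔA) := by
    have : Matrix.diagonal (fun i => ∑ j, (A + ΔA) i j)
        = Matrix.diagonal (fun i => ∑ j, A i j) + Matrix.diagonal (fun i => ∑ j, ΔA i j) := by
      rw [Matrix.diagonal_add]
      simp [Finset.sum_add_distrib]
    rw [this]
    abel
  rw [split, Matrix.mul_assoc, Matrix.add_mul, key, add_zero, ← Matrix.mul_assoc]
end

section
/- Let A ∈ ℝ^{n×n} be symmetric with nonnegative entries, L = diag(A·1) − A, and let H ∈ {0,1}^{n×k} be a partition indicator matrix with group map g (g(i) = the group of node i). Then L H = H L^π (where L^π = H† L H) if and only if for every pair of distinct groups r ≠ s, all nodes i in group r have the same total edge weight to group s, i.e. Σ_{j : g(j)=s} A_{ij} takes the same value for all i with g(i) = r. -/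
open Matrix BigOperators

/-- The algebraic condition `L H = H L^π` (with `L = diag(A·1) − A` and
`L^π = H† L H`) holds if and only if for every pair of distinct groups `r ≠ s`, all nodes in
group `r` have the same total edge weight to group `s`: the partition is externally equitable. -/
theorem EEP_iff_equal_external_weights
    {n k : ℕ} (g : Fin n → Fin k) (hg : Function.Surjective g)
    (H : Matrix (Fin n) (Fin k) ℝ)
    (hH : H = Matrix.of fun i j => if g i = j then (1 : ℝ) else 0)
    (Hdag : Matrix (Fin k) (Fin n) ℝ) (hHdag : Hdag = (Hᵀ * H)⁻¹ * Hᵀ)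
    (A : Matrix (Fin n) (Fin n) ℝ) (hAsymm : A.IsSymm) (hAnn : ∀ i j, 0 ≤ A i j)
    (L : Matrix (Fin n) (Fin n) ℝ)
    (hL : L = Matrix.diagonal (fun i => ∑ j, A i j) - A) :
    L * H = H * (Hdag * L * H)
      ↔ ∀ r s : Fin k, r ≠ s → ∀ i i' : Fin n, g i = r → g i' = r →
          ∑ j ∈ Finset.univ.filter (fun j => g j = s), A i j
            = ∑ j ∈ Finset.univ.filter (fun j => g j = s), A i' j := by
  have hN : Hᵀ * H = Matrix.diagonal
      (fun r => ((Finset.univ.filter (fun j => g j = r)).card : ℝ)) := by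
    ext r s
    rw [Matrix.mul_apply, hH]
    by_cases h : r = s
    · subst h
      simp [← ite_and]
    · rw [Matrix.diagonal_apply_ne _ h]
      apply Finset.sum_eq_zero
      intro j _
      simp only [Matrix.transpose_apply, Matrix.of_apply]
      by_cases h1 : g j = r
      · have h2 : g j ≠ s := fun h2 => h (h1.symm.trans h2)
        simp [h2]
      · simp [h1]
  have hdet : IsUnit (Hᵀ * H).det := by
    rw [hN, Matrix.det_diagonal, isUnit_iff_ne_zero, Finset.prod_ne_zero_iff]
    intro r _
    obtain ⟨j, hj⟩ := hg r
    have : 0 < (Finset.univ.filter (fun j => g j = r)).card :=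
      Finset.card_pos.mpr ⟨j, by simp [hj]⟩
    exact_mod_cast this.ne'
  have hinv : Hdag * H = 1 := by
    rw [hHdag, Matrix.mul_assoc, Matrix.nonsing_inv_mul _ hdet]
  have hHM : ∀ (M : Matrix (Fin k) (Fin k) ℝ) i s, (H * M) i s = M (g i) s := by
    intro M i s
    simp [Matrix.mul_apply, hH]
  have hLH : ∀ i s, (L * H) i s = (if g i = s then ∑ j, A i j else 0)
      - ∑ j ∈ Finset.univ.filter (fun j => g j = s), A i j := by
    intro i s
    rw [hL, Matrix.sub_mul, Matrix.sub_apply, Matrix.diagonal_mul]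
    simp [Matrix.mul_apply, hH, Finset.sum_filter]
  constructor
  · intro h r s hrs i i' hi hi'
    have e : (L * H) i s = (L * H) i' s := by
      rw [h, hHM, hHM, hi, hi']
    rw [hLH, hLH, hi, hi'] at e
    simpa [hrs] using e
  · intro h
    have key : ∀ i i' s, g i = g i' → (L * H) i s = (L * H) i' s := by
      intro i i' s hii
      rw [hLH, hLH, hii]
      by_cases hs : g i' = s
      · have tot : ∀ i, ∑ j, A i j
            = ∑ t, ∑ j ∈ Finset.univ.filter (fun j => g j = t), A i j := fun i =>
          (Finset.sum_fiberwise Finset.univ g (fun j => A i j)).symm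
        rw [if_pos hs, if_pos hs, tot i, tot i',
          ← Finset.add_sum_erase _ _ (Finset.mem_univ s),
          ← Finset.add_sum_erase _ _ (Finset.mem_univ s), add_sub_cancel_left,
          add_sub_cancel_left]
        apply Finset.sum_congr rfl
        intro t ht
        exact h s t (Finset.ne_of_mem_erase ht).symm i i' (hii.trans hs) hs
      · rw [if_neg hs, if_neg hs, h (g i') s hs i i' hii rfl]
    choose c hc using hg
    have hX : L * H = H * (Matrix.of fun r s => (L * H) (c r) s) := by
      ext i s
      rw [hHM, Matrix.of_apply]
      exact key _ _ _ (hc _).symm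
    have hX2 : Hdag * L * H = Matrix.of fun r s => (L * H) (c r) s := by
      rw [Matrix.mul_assoc]
      conv_lhs => rw [hX]
      rw [← Matrix.mul_assoc, hinv, Matrix.one_mul]
    rw [hX2]
    exact hX
end

section
/- Let A ∈ ℝ^{n×n} be symmetric with nonnegative entries and H ∈ {0,1}^{n×k} a partition indicator matrix. Then the quotient Laplacian factorizes as a Laplacian of the quotient graph: H† (diag(A·1) − A) H = diag(A^π·1) − A^π, where A^π = H† A H. -/
open Matrix BigOperators

/-- The quotient Laplacian factorizes as the Laplacian of the quotient graph:
`H† (diag(A·1) − A) H = diag(A^π·1) − A^π` with `A^π = H† A H`. -/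
theorem quotient_laplacian_eq_laplacian_of_quotient
    {n k : ℕ} (g : Fin n → Fin k) (hg : Function.Surjective g)
    (H : Matrix (Fin n) (Fin k) ℝ)
    (hH : H = Matrix.of fun i j => if g i = j then (1 : ℝ) else 0)
    (Hdag : Matrix (Fin k) (Fin n) ℝ) (hHdag : Hdag = (Hᵀ * H)⁻¹ * Hᵀ)
    (A : Matrix (Fin n) (Fin n) ℝ) (hAsymm : A.IsSymm) (hAnn : ∀ i j, 0 ≤ A i j)
    (Api : Matrix (Fin k) (Fin k) ℝ) (hApi : Api = Hdag * A * H) :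
    Hdag * (Matrix.diagonal (fun i => ∑ j, A i j) - A) * H
      = Matrix.diagonal (fun r => ∑ s, Api r s) - Api := by
  have hN : Hᵀ * H = Matrix.diagonal (fun r => ∑ i, if g i = r then (1 : ℝ) else 0) := by
    ext r s
    rw [Matrix.mul_apply, Matrix.diagonal_apply]
    simp only [hH, Matrix.transpose_apply, Matrix.of_apply]
    split_ifs with h
    · subst h
      exact Finset.sum_congr rfl fun i _ => by split_ifs <;> simp
    · refine Finset.sum_eq_zero fun i _ => ?_
      by_cases h1 : g i = r
      · have h2 : g i ≠ s := fun h2 => h (h1.symm.trans h2)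
        simp [h2]
      · simp [h1]
  obtain ⟨d, hd⟩ : ∃ d : Fin k → ℝ, ∀ r i, Hdag r i = if g i = r then d r else 0 := by
    rw [hN, Matrix.inv_diagonal] at hHdag
    refine ⟨Ring.inverse (fun r => ∑ i, if g i = r then (1 : ℝ) else 0), fun r i => ?_⟩
    rw [hHdag, Matrix.diagonal_mul, Matrix.transpose_apply, hH, Matrix.of_apply, mul_ite,
      mul_one, mul_zero]
  have hrow : ∀ r, ∑ s, Api r s = ∑ i, Hdag r i * ∑ j, A i j := by
    intro r
    have h1 : ∀ s, Api r s = ∑ j, if g j = s then (Hdag * A) r j else 0 := by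
      intro s
      rw [hApi, Matrix.mul_apply]
      refine Finset.sum_congr rfl fun j _ => ?_
      rw [hH, Matrix.of_apply, mul_ite, mul_one, mul_zero]
    simp only [h1]
    rw [Finset.sum_comm]
    simp only [Finset.sum_ite_eq, Finset.mem_univ, if_true, Matrix.mul_apply, Finset.mul_sum]
    rw [Finset.sum_comm]
  rw [Matrix.mul_sub, Matrix.sub_mul, ← hApi]
  congr 1
  ext r s
  rw [Matrix.mul_apply, Matrix.diagonal_apply, hrow]
  simp only [Matrix.mul_diagonal]
  split_ifs with h
  · subst h
    refine Finset.sum_congr rfl fun i _ => ?_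
    rw [hd, hH, Matrix.of_apply]
    split_ifs <;> simp
  · refine Finset.sum_eq_zero fun i _ => ?_
    rw [hd, hH, Matrix.of_apply]
    by_cases h1 : g i = r
    · have h2 : g i ≠ s := fun h2 => h (h1.symm.trans h2)
      simp [h2]
    · simp [h1]
end

section
/- Let V ∈ ℝ^{n×m} with rows v₁,…,vₙ ∈ ℝ^m, and let H ∈ {0,1}^{n×k} be a partition indicator matrix with group sizes n₁,…,n_k. Define the group centroids μ_j = (1/n_j) Σ_{i=1}^n H_{ij} v_i for j = 1,…,k. Then the k-means objective for this assignment equals the squared projection error: Σ_{j=1}^k Σ_{i=1}^n H_{ij} ‖v_i − μ_j‖² = ‖(I − H H†) V‖_F². Consequently, a partition minimizes the k-means objective on the rows of V over all partitions into k nonempty groups if and only if it minimizes the squared projection error ‖(I − H H†) V‖_F². -/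
open Matrix BigOperators

/-- The indicator matrix of the partition of `Fin n` given by the group map `g`. -/
noncomputable def indicatorMatrix {n k : ℕ} (g : Fin n → Fin k) : Matrix (Fin n) (Fin k) ℝ :=
  Matrix.of fun i j => if g i = j then (1 : ℝ) else 0

/-- The squared projection error `‖(I − H H†) V‖_F²` of the partition `g` w.r.t. `V`. -/
noncomputable def projErrorSq {n k m : ℕ} (g : Fin n → Fin k)
    (V : Matrix (Fin n) (Fin m) ℝ) : ℝ :=
  let H := indicatorMatrix g
  let Hdag := (Hᵀ * H)⁻¹ * Hᵀ
  ∑ i, ∑ a, ((((1 : Matrix (Fin n) (Fin n) ℝ) - H * Hdag) * V) i a) ^ 2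

/-- The `k`-means objective `Σ_j Σ_i H_{ij} ‖v_i − μ_j‖²` for the assignment `g` of the rows
`v_1, …, v_n` of `V`, where `μ_j = (1/n_j) Σ_i H_{ij} v_i` is the centroid of group `j`. -/
noncomputable def kmeansObjective {n k m : ℕ} (g : Fin n → Fin k)
    (V : Matrix (Fin n) (Fin m) ℝ) : ℝ :=
  let H := indicatorMatrix g
  let μ : Fin k → Fin m → ℝ := fun j a =>
    (∑ i, H i j * V i a) / ((Finset.univ.filter (fun i => g i = j)).card : ℝ)
  ∑ j, ∑ i, H i j * (∑ a, (V i a - μ j a) ^ 2)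

theorem gram_inv_aux {n k : ℕ} (g : Fin n → Fin k) (hg : Function.Surjective g) :
    ((indicatorMatrix g)ᵀ * indicatorMatrix g)⁻¹ =
      Matrix.diagonal fun j => ((Finset.univ.filter (fun i => g i = j)).card : ℝ)⁻¹ := by
  have h : (indicatorMatrix g)ᵀ * indicatorMatrix g =
      Matrix.diagonal fun j => ((Finset.univ.filter (fun i => g i = j)).card : ℝ) := by
    ext a b
    rw [Matrix.mul_apply, Matrix.diagonal_apply]
    simp only [indicatorMatrix, Matrix.transpose_apply, Matrix.of_apply]
    split_ifs with hab
    · subst hab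
      rw [Finset.card_filter, Nat.cast_sum]
      apply Finset.sum_congr rfl
      intro i _
      by_cases h1 : g i = a <;> simp [h1]
    · apply Finset.sum_eq_zero
      intro i _
      by_cases h1 : g i = a
      · have h2 : g i ≠ b := fun h2 => hab (h1.symm.trans h2)
        simp [h2]
      · simp [h1]
  rw [h]
  apply Matrix.inv_eq_right_inv
  rw [Matrix.diagonal_mul_diagonal, ← Matrix.diagonal_one]
  congr 1
  funext j
  apply mul_inv_cancel₀
  obtain ⟨i, hi⟩ := hg j
  exact Nat.cast_ne_zero.mpr (Finset.card_ne_zero_of_mem (a := i) (by simp [hi]))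

theorem kmeans_eq_aux {n k m : ℕ} (V : Matrix (Fin n) (Fin m) ℝ) (g : Fin n → Fin k)
    (hg : Function.Surjective g) : kmeansObjective g V = projErrorSq g V := by
  unfold kmeansObjective projErrorSq
  simp only [gram_inv_aux g hg]
  rw [Finset.sum_comm]
  apply Finset.sum_congr rfl
  intro i _
  have hH : ∀ j, indicatorMatrix g i j = if g i = j then 1 else 0 := fun j => rfl
  simp only [hH, ite_mul, one_mul, zero_mul, Finset.sum_ite_eq, Finset.mem_univ, if_true]
  apply Finset.sum_congr rfl
  intro a _
  congr 1
  rw [Matrix.sub_mul, Matrix.one_mul, Matrix.sub_apply, Matrix.mul_assoc, Matrix.mul_assoc,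
    Matrix.mul_apply]
  simp only [hH, ite_mul, one_mul, zero_mul, Finset.sum_ite_eq, Finset.mem_univ, if_true]
  rw [Matrix.diagonal_mul, Matrix.mul_apply, div_eq_inv_mul]
  rfl

/-- The `k`-means objective for an assignment into `k` nonempty groups equals
the squared projection error; consequently, a partition minimizes the `k`-means objective on the
rows of `V` over all partitions into `k` nonempty groups iff it minimizes the squared projection
error. -/
theorem kmeans_eq_projection_error
    {n k m : ℕ} (V : Matrix (Fin n) (Fin m) ℝ) :
    (∀ g : Fin n → Fin k, Function.Surjective g → kmeansObjective g V = projErrorSq g V)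
      ∧ ∀ g₀ : Fin n → Fin k, Function.Surjective g₀ →
          ((∀ g : Fin n → Fin k, Function.Surjective g →
              kmeansObjective g₀ V ≤ kmeansObjective g V)
            ↔ (∀ g : Fin n → Fin k, Function.Surjective g →
                projErrorSq g₀ V ≤ projErrorSq g V)) := by
  refine ⟨fun g hg => kmeans_eq_aux V g hg, fun g₀ h₀ => ?_⟩
  refine forall_congr' fun g => forall_congr' fun hg => ?_
  rw [kmeans_eq_aux V g hg, kmeans_eq_aux V g₀ h₀]
end

section
/- Let H ∈ {0,1}^{n×k} be a partition indicator matrix into k nonempty groups and let S ⊆ ℝⁿ be a κ-dimensional subspace (1 ≤ κ ≤ k ≤ n) contained in the column span of H. Let U be a random n×(k−κ) real matrix whose columns are almost surely orthonormal and orthogonal to S, and whose distribution is invariant under left multiplication by every orthogonal Q ∈ O(n) that fixes S pointwise. Then E[‖(I − H H†) U‖_F²] = (n − k)(k − κ)/(n − κ). Moreover, if B = [V_S, U] ∈ ℝ^{n×k} where the columns of V_S lie in S, then E[‖(I − H H†) B‖_F²] = (n − k)(k − κ)/(n − κ). -/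
open Matrix MeasureTheory BigOperators

def qF {n m : ℕ} (u : Fin n → ℝ) (A : Fin n → Fin m → ℝ) : ℝ := ∑ j, (∑ l, u l * A l j) ^ 2

lemma qF_cont {n m : ℕ} (u : Fin n → ℝ) : Continuous (qF u : (Fin n → Fin m → ℝ) → ℝ) := by
  unfold qF; fun_prop

lemma householder {n : ℕ} (u v : Fin n → ℝ) (h : u ⬝ᵥ u = v ⬝ᵥ v) (huv : u ≠ v) :
    ∃ Q : Matrix (Fin n) (Fin n) ℝ, Qᵀ * Q = 1 ∧
      (∀ s : Fin n → ℝ, u ⬝ᵥ s = 0 → v ⬝ᵥ s = 0 → Q.mulVec s = s) ∧ u ᵥ* Q = v := by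
  set w := u - v with hw
  have hw0 : w ⬝ᵥ w ≠ 0 := by
    intro h0
    exact huv (sub_eq_zero.mp (dotProduct_self_eq_zero.mp h0))
  have e : w ⬝ᵥ w = 2 * (u ⬝ᵥ w) := by
    simp only [hw, dotProduct_sub, sub_dotProduct, dotProduct_comm v u]
    linarith
  have hT : (1 - (2 / (w ⬝ᵥ w)) • vecMulVec w w)ᵀ = 1 - (2 / (w ⬝ᵥ w)) • vecMulVec w w := by
    simp [transpose_sub, transpose_smul, transpose_vecMulVec]
  refine ⟨1 - (2 / (w ⬝ᵥ w)) • vecMulVec w w, ?_, ?_, ?_⟩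
  · rw [hT]
    simp only [sub_mul, mul_sub, one_mul, mul_one, smul_mul_assoc, mul_smul_comm,
      vecMulVec_mul_vecMulVec]
    ext i j
    simp [vecMulVec_apply]
    field_simp
    ring
  · intro s h1 h2
    have : w ⬝ᵥ s = 0 := by simp [hw, sub_dotProduct, h1, h2]
    simp [sub_mulVec, smul_mulVec, vecMulVec_mulVec, this]
  · have huw : u ⬝ᵥ w ≠ 0 := fun h0 => hw0 (by rw [e, h0, mul_zero])
    rw [vecMul_sub, vecMul_smul, vecMul_vecMulVec, vecMul_one, e]
    have : (2 / (2 * u ⬝ᵥ w)) • (u ⬝ᵥ w) • w = w := by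
      rw [smul_smul, div_mul_eq_mul_div, div_self (by positivity), one_smul]
    rw [this, hw]; simp

lemma onb_exists {n κ : ℕ} (S : Submodule ℝ (Fin n → ℝ)) (hSdim : Module.finrank ℝ S = κ) :
    ∃ m : ℕ, m + κ = n ∧ ∃ b : Fin m → Fin n → ℝ,
      (∀ i, b i ⬝ᵥ b i = 1) ∧ (∀ i, ∀ s ∈ S, b i ⬝ᵥ s = 0) ∧
      ∀ x : Fin n → ℝ, (∀ s ∈ S, x ⬝ᵥ s = 0) → ∑ i, (b i ⬝ᵥ x) ^ 2 = x ⬝ᵥ x := by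
  let e := (WithLp.linearEquiv 2 ℝ (Fin n → ℝ)).symm
  let S' : Submodule ℝ (EuclideanSpace ℝ (Fin n)) := S.map e.toLinearMap
  have hd : Module.finrank ℝ S' = κ := by rw [← hSdim]; exact LinearEquiv.finrank_map_eq e S
  have hsum := Submodule.finrank_add_finrank_orthogonal S'
  rw [hd, finrank_euclideanSpace_fin] at hsum
  have hin : ∀ x y : EuclideanSpace ℝ (Fin n), inner ℝ x y = x.ofLp ⬝ᵥ y.ofLp := by
    intro x y
    rw [EuclideanSpace.inner_eq_star_dotProduct, dotProduct_comm]; simp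
  let b := stdOrthonormalBasis ℝ S'ᗮ
  refine ⟨Module.finrank ℝ S'ᗮ, by omega, fun i => (b i : EuclideanSpace ℝ (Fin n)).ofLp, ?_, ?_, ?_⟩
  · intro i
    rw [← hin, real_inner_self_eq_norm_sq]
    have := b.orthonormal.1 i
    simp only [Submodule.coe_norm] at this
    rw [this]; norm_num
  · intro i s hs
    have := (Submodule.mem_orthogonal' S' _).1 (b i).2 (e s) ⟨s, hs, rfl⟩
    rw [hin] at this
    exact this
  · intro x hx
    have hxm : e x ∈ S'ᗮ := by
      rw [Submodule.mem_orthogonal']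
      rintro _ ⟨s, hs, rfl⟩
      rw [hin]; exact hx s hs
    have := b.sum_sq_norm_inner_right ⟨e x, hxm⟩
    have h2 : ‖(⟨e x, hxm⟩ : S'ᗮ)‖ ^ 2 = x ⬝ᵥ x := by
      rw [← real_inner_self_eq_norm_sq, Submodule.coe_inner, hin]; rfl
    rw [h2] at this
    rw [← this]
    refine Finset.sum_congr rfl fun i _ => ?_
    rw [Submodule.coe_inner, hin, Real.norm_eq_abs, sq_abs]
    rfl

lemma P_facts {n k : ℕ} (g : Fin n → Fin k) (hg : Function.Surjective g)
    (H : Matrix (Fin n) (Fin k) ℝ)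
    (hH : H = Matrix.of fun i j => if g i = j then (1 : ℝ) else 0)
    (P : Matrix (Fin n) (Fin n) ℝ) (hP : P = 1 - H * ((Hᵀ * H)⁻¹ * Hᵀ)) :
    P * H = 0 ∧ ∑ i, P i ⬝ᵥ P i = (n : ℝ) - k := by
  have hD : Hᵀ * H = diagonal fun j => ∑ i, if g i = j then (1 : ℝ) else 0 := by
    ext a b
    simp only [hH, mul_apply, transpose_apply, of_apply, diagonal_apply]
    split_ifs with h
    · subst h
      refine Finset.sum_congr rfl fun i _ => ?_
      split_ifs <;> norm_num
    · apply Finset.sum_eq_zero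
      intro i _
      by_cases h1 : g i = a
      · simp [h1, h]
      · simp [h1]
  have hu : IsUnit (Hᵀ * H).det := by
    rw [hD, det_diagonal, isUnit_iff_ne_zero, Finset.prod_ne_zero_iff]
    intro j _
    obtain ⟨i, hi⟩ := hg j
    apply ne_of_gt
    refine Finset.sum_pos' (fun i _ => by split_ifs <;> norm_num) ⟨i, Finset.mem_univ _, by simp [hi]⟩
  have h1 : ((Hᵀ * H)⁻¹ * Hᵀ) * H = 1 := by
    rw [Matrix.mul_assoc, nonsing_inv_mul _ hu]
  have h2 : P * H = 0 := by
    rw [hP, Matrix.sub_mul, Matrix.mul_assoc, h1]; simp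
  have hs : Pᵀ = P := by
    rw [hP]
    simp [transpose_sub, transpose_mul, transpose_nonsing_inv, Matrix.mul_assoc]
  have hi : P * Pᵀ = P := by
    rw [hs]; nth_rw 2 [hP]
    rw [Matrix.mul_sub, ← Matrix.mul_assoc, h2]; simp
  refine ⟨h2, ?_⟩
  have : ∑ i, P i ⬝ᵥ P i = (P * Pᵀ).trace := rfl
  rw [this, hi, hP, trace_sub, trace_mul_comm, h1]; simp

lemma f_formula {n m κ : ℕ} 
    (S : Submodule ℝ (Fin n → ℝ)) (hSdim : Module.finrank ℝ S = κ)
    {Ω : Type*} [MeasurableSpace Ω] (μ : Measure Ω) [IsProbabilityMeasure μ]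
    (U : Ω → Fin n → Fin m → ℝ) (hUmeas : Measurable U)
    (horth : ∀ᵐ ω ∂μ,
      (∀ a b : Fin m, ∑ i, U ω i a * U ω i b = if a = b then (1 : ℝ) else 0)
      ∧ (∀ a : Fin m, ∀ s ∈ S, ∑ i, U ω i a * s i = 0))
    (hinv : ∀ Q : Matrix (Fin n) (Fin n) ℝ, Qᵀ * Q = 1 → (∀ s ∈ S, Q.mulVec s = s) →
      Measure.map (fun ω => fun i j => ∑ l, Q i l * U ω l j) μ = Measure.map U μ) :
    (∀ u, Integrable (fun ω => qF u (U ω)) μ) ∧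
    ∀ u : Fin n → ℝ, (∀ s ∈ S, u ⬝ᵥ s = 0) →
      ((n : ℝ) - κ) * ∫ ω, qF u (U ω) ∂μ = (u ⬝ᵥ u) * m := by
  have hint : ∀ u, Integrable (fun ω => qF u (U ω)) μ := by
    intro u
    refine Integrable.of_bound (C := m * (u ⬝ᵥ u))
      ((qF_cont u).measurable.comp hUmeas).aestronglyMeasurable ?_
    filter_upwards [horth] with ω hω
    rw [Real.norm_eq_abs, abs_of_nonneg (Finset.sum_nonneg fun j _ => sq_nonneg _)]
    have : ∀ j ∈ (Finset.univ : Finset (Fin m)), (∑ l, u l * U ω l j) ^ 2 ≤ u ⬝ᵥ u := by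
      intro j _
      refine (Finset.sum_mul_sq_le_sq_mul_sq _ _ _).trans ?_
      have h1 := hω.1 j j
      simp only [if_true] at h1
      simp only [pow_two, h1, mul_one, dotProduct, le_refl]
    refine (Finset.sum_le_sum this).trans ?_
    simp
  refine ⟨hint, ?_⟩
  have heq : ∀ u v : Fin n → ℝ, (∀ s ∈ S, u ⬝ᵥ s = 0) → (∀ s ∈ S, v ⬝ᵥ s = 0) →
      u ⬝ᵥ u = v ⬝ᵥ v → ∫ ω, qF u (U ω) ∂μ = ∫ ω, qF v (U ω) ∂μ := by
    intro u v hu hv h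
    by_cases huv : u = v
    · rw [huv]
    obtain ⟨Q, hQ, hQS, hQu⟩ := householder u v h huv
    have hm := hinv Q hQ (fun s hs => hQS s (hu s hs) (hv s hs))
    have hmeas : Measurable (fun ω => fun i j => ∑ l, Q i l * U ω l j) := by
      have : Continuous (fun (A : Fin n → Fin m → ℝ) => fun i j => ∑ l, Q i l * A l j) := by
        fun_prop
      exact this.measurable.comp hUmeas
    have e1 := integral_map (μ := μ) hUmeas.aemeasurable
      (f := qF u) (qF_cont u).aestronglyMeasurable
    have e2 := integral_map (μ := μ) hmeas.aemeasurable
      (f := qF u) (qF_cont u).aestronglyMeasurable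
    rw [← e1, ← hm, e2]
    congr 1
    ext ω
    unfold qF
    refine Finset.sum_congr rfl fun j _ => ?_
    congr 1
    rw [← hQu]
    exact dotProduct_mulVec u Q (fun l => U ω l j)
  have hsc : ∀ (c : ℝ) (u : Fin n → ℝ), ∫ ω, qF (c • u) (U ω) ∂μ = c ^ 2 * ∫ ω, qF u (U ω) ∂μ := by
    intro c u
    rw [← integral_const_mul]
    congr 1
    ext ω
    simp only [qF, Finset.mul_sum, ← mul_pow, Pi.smul_apply, smul_eq_mul, mul_assoc]
  obtain ⟨r, hr, b, hb1, hbS, hbP⟩ := onb_exists S hSdim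
  intro u hu
  have key : ∀ i, ∫ ω, qF u (U ω) ∂μ = (u ⬝ᵥ u) * ∫ ω, qF (b i) (U ω) ∂μ := by
    intro i
    have h0 : 0 ≤ u ⬝ᵥ u := Finset.sum_nonneg fun j _ => mul_self_nonneg _
    rw [heq u (√(u ⬝ᵥ u) • b i) hu, hsc, Real.sq_sqrt h0]
    · intro s hs; simp [hbS i s hs]
    · simp [hb1, Real.mul_self_sqrt h0]
  have tot : ∑ i, ∫ ω, qF (b i) (U ω) ∂μ = m := by
    rw [← integral_finsetSum _ (fun i _ => hint _)]
    have : ∫ ω, ∑ i, qF (b i) (U ω) ∂μ = ∫ ω, (m : ℝ) ∂μ := by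
      apply integral_congr_ae
      filter_upwards [horth] with ω hω
      unfold qF
      rw [Finset.sum_comm]
      have : ∀ j ∈ (Finset.univ : Finset (Fin m)), ∑ i, (∑ l, b i l * U ω l j) ^ 2 = 1 := by
        intro j _
        have h1 := hω.1 j j
        simp only [if_true] at h1
        exact (hbP (fun l => U ω l j) (hω.2 j)).trans h1
      rw [Finset.sum_congr rfl this]; simp
    rw [this]; simp
  have hrn : (n : ℝ) - κ = r := by rw [← hr]; push_cast; ring
  rw [hrn, ← tot, Finset.mul_sum, ← Finset.sum_congr rfl (fun i _ => key i)]
  simp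

/-- Let `H` be a partition indicator matrix into `k` nonempty groups, `S ⊆ ℝⁿ`
a `κ`-dimensional subspace (`1 ≤ κ ≤ k ≤ n`) contained in the column span of `H`, and `U` a
random `n × (k−κ)` matrix whose columns are a.s. orthonormal and orthogonal to `S`, with
distribution invariant under every orthogonal `Q ∈ O(n)` fixing `S` pointwise.  Then
`E[‖(I − H H†) U‖_F²] = (n−k)(k−κ)/(n−κ)`; moreover, appending any columns `V_S` lying in `S`
to form `B = [V_S, U]` gives the same expected projection error. -/
theorem conditional_expected_projection_error
    {n k κ : ℕ} (hκ : 1 ≤ κ) (hκk : κ ≤ k) (hkn : k ≤ n)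
    (g : Fin n → Fin k) (hg : Function.Surjective g)
    (H : Matrix (Fin n) (Fin k) ℝ)
    (hH : H = Matrix.of fun i j => if g i = j then (1 : ℝ) else 0)
    (Hdag : Matrix (Fin k) (Fin n) ℝ) (hHdag : Hdag = (Hᵀ * H)⁻¹ * Hᵀ)
    (P : Matrix (Fin n) (Fin n) ℝ) (hP : P = 1 - H * Hdag)
    (S : Submodule ℝ (Fin n → ℝ)) (hSdim : Module.finrank ℝ S = κ)
    (hSsub : S ≤ Submodule.span ℝ (Set.range fun j : Fin k => fun i : Fin n => H i j))
    {Ω : Type*} [MeasurableSpace Ω] (μ : Measure Ω) [IsProbabilityMeasure μ]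
    (U : Ω → Fin n → Fin (k - κ) → ℝ) (hUmeas : Measurable U)
    (horth : ∀ᵐ ω ∂μ,
      (∀ a b : Fin (k - κ), ∑ i, U ω i a * U ω i b = if a = b then (1 : ℝ) else 0)
      ∧ (∀ a : Fin (k - κ), ∀ s ∈ S, ∑ i, U ω i a * s i = 0))
    (hinv : ∀ Q : Matrix (Fin n) (Fin n) ℝ, Qᵀ * Q = 1 → (∀ s ∈ S, Q.mulVec s = s) →
      Measure.map (fun ω => fun i j => ∑ l, Q i l * U ω l j) μ = Measure.map U μ) :
    (∫ ω, (∑ i, ∑ j, (∑ l, P i l * U ω l j) ^ 2) ∂μ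
        = ((n : ℝ) - k) * ((k : ℝ) - κ) / ((n : ℝ) - κ))
    ∧ ∀ VS : Matrix (Fin n) (Fin κ) ℝ, (∀ a : Fin κ, (fun i => VS i a) ∈ S) →
        ∫ ω, ((∑ i, ∑ a : Fin κ, (∑ l, P i l * VS l a) ^ 2)
            + ∑ i, ∑ j, (∑ l, P i l * U ω l j) ^ 2) ∂μ
          = ((n : ℝ) - k) * ((k : ℝ) - κ) / ((n : ℝ) - κ) := by
  subst hHdag
  obtain ⟨hPH, htr⟩ := P_facts g hg H hH P hP
  have hPS : ∀ s ∈ S, P *ᵥ s = 0 := by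
    intro s hs
    have := hSsub hs
    clear hs
    induction this using Submodule.span_induction with
    | mem x hx =>
      obtain ⟨j, rfl⟩ := hx
      ext i
      exact congrFun (congrFun hPH i) j
    | zero => simp
    | add x y _ _ hx hy => 
      rw [mulVec_add, hx, hy, add_zero]
    | smul a x _ hx => rw [mulVec_smul, hx, smul_zero]
  obtain ⟨hint, hf⟩ := f_formula S hSdim μ U hUmeas horth hinv
  have main : ∫ ω, (∑ i, ∑ j, (∑ l, P i l * U ω l j) ^ 2) ∂μ
        = ((n : ℝ) - k) * ((k : ℝ) - κ) / ((n : ℝ) - κ) := by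
    have e : ∫ ω, (∑ i, ∑ j, (∑ l, P i l * U ω l j) ^ 2) ∂μ = ∑ i, ∫ ω, qF (P i) (U ω) ∂μ :=
      integral_finsetSum _ (fun i _ => hint (P i))
    by_cases hn : (n : ℝ) - κ = 0
    · have h1 : n = κ := by exact_mod_cast sub_eq_zero.mp hn
      have h2 : k - κ = 0 := by omega
      have : IsEmpty (Fin (k - κ)) := by rw [h2]; infer_instance
      rw [hn]; simp
    · rw [e, eq_div_iff hn, mul_comm, Finset.mul_sum,
        Finset.sum_congr rfl (fun i _ => hf (P i) (fun s hs => congrFun (hPS s hs) i)),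
        ← Finset.sum_mul, htr, Nat.cast_sub hκk]
  refine ⟨main, fun VS hVS => ?_⟩
  rw [← main]
  have hz : ∑ i, ∑ a : Fin κ, (∑ l, P i l * VS l a) ^ 2 = 0 := by
    refine Finset.sum_eq_zero fun i _ => Finset.sum_eq_zero fun a _ => ?_
    have : ∑ l, P i l * VS l a = 0 := congrFun (hPS _ (hVS a)) i
    rw [this]; norm_num
  simp only [hz, zero_add]
end

section
/- Let H ∈ {0,1}^{n×k} be a partition indicator matrix into k nonempty groups (so the all-ones vector 1 lies in the column span of H). Let B = [n^{-1/2}·1, U] ∈ ℝ^{n×k}, where U is a random n×(k−1) real matrix whose columns are almost surely orthonormal and orthogonal to 1, and whose distribution is invariant under left multiplication by every orthogonal Q ∈ O(n) fixing 1. Then E[‖(I − H H†) B‖_F²] = (n − k)(k − 1)/(n − 1). -/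
open Matrix MeasureTheory BigOperators

lemma proj_aux {n k : ℕ}
    (g : Fin n → Fin k) (hg : Function.Surjective g)
    (H : Matrix (Fin n) (Fin k) ℝ)
    (hH : H = Matrix.of fun i j => if g i = j then (1 : ℝ) else 0)
    (Hdag : Matrix (Fin k) (Fin n) ℝ) (hHdag : Hdag = (Hᵀ * H)⁻¹ * Hᵀ)
    (P : Matrix (Fin n) (Fin n) ℝ) (hP : P = 1 - H * Hdag) :
    (∀ i, ∑ l, P i l = 0) ∧ ∑ i, ∑ l, P i l ^ 2 = (n : ℝ) - k := by
  have hN : Hᵀ * H = Matrix.diagonal (fun j => ∑ i, if g i = j then (1:ℝ) else 0) := by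
    ext a b
    rw [Matrix.mul_apply, Matrix.diagonal_apply, hH]
    simp only [Matrix.transpose_apply, Matrix.of_apply]
    split_ifs with h
    · subst h
      refine Finset.sum_congr rfl fun i _ => ?_
      split_ifs <;> simp
    · refine Finset.sum_eq_zero fun i _ => ?_
      split_ifs with h1 h2
      · exact absurd (h1.symm.trans h2) h
      all_goals simp
  have hdet : IsUnit (Hᵀ * H).det := by
    rw [hN, Matrix.det_diagonal, isUnit_iff_ne_zero, Finset.prod_ne_zero_iff]
    intro j _
    obtain ⟨i, hi⟩ := hg j
    apply ne_of_gt
    apply Finset.sum_pos'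
    · intro i _; split_ifs <;> norm_num
    · exact ⟨i, Finset.mem_univ _, by simp [hi]⟩
  have hDH : Hdag * H = 1 := by
    rw [hHdag, Matrix.mul_assoc, Matrix.nonsing_inv_mul _ hdet]
  have hPH : P * H = 0 := by
    rw [hP, Matrix.sub_mul, Matrix.mul_assoc, hDH]; simp
  have hsym : Pᵀ = P := by
    rw [hP, hHdag]
    simp only [Matrix.transpose_sub, Matrix.transpose_mul, Matrix.transpose_nonsing_inv,
      Matrix.transpose_transpose, Matrix.transpose_one, Matrix.mul_assoc]
  have hPP : P * P = P := by
    have : P * P = P * (1 - H * Hdag) := by rw [← hP]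
    rw [this, Matrix.mul_sub, ← Matrix.mul_assoc, hPH]; simp
  have htr : P.trace = (n : ℝ) - k := by
    rw [hP, Matrix.trace_sub, Matrix.trace_mul_comm, hDH]; simp
  constructor
  · intro i
    have h1 : ∑ j, (P * H) i j = 0 := by simp [hPH]
    simp only [Matrix.mul_apply] at h1
    rw [Finset.sum_comm] at h1
    rw [← h1]
    refine Finset.sum_congr rfl fun l _ => ?_
    rw [← Finset.mul_sum, hH]
    simp
  · rw [← htr]
    conv_rhs => rw [← hPP]
    rw [Matrix.trace]
    refine Finset.sum_congr rfl fun i _ => ?_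
    rw [Matrix.diag_apply, Matrix.mul_apply]
    refine Finset.sum_congr rfl fun l _ => ?_
    have : P l i = P i l := congrFun (congrFun hsym i) l
    rw [this, sq]

/-- Let `H` be a partition indicator matrix into `k` nonempty groups (so the
all-ones vector lies in its column span), and let `B = [n^{-1/2}·𝟙, U]` where `U` is a random
`n × (k−1)` matrix whose columns are a.s. orthonormal and orthogonal to `𝟙`, with distribution
invariant under every orthogonal `Q ∈ O(n)` fixing `𝟙`.  Then
`E[‖(I − H H†) B‖_F²] = (n − k)(k − 1)/(n − 1)`. -/
theorem expected_projection_error_given_constant_vector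
    {n k : ℕ} (hk : 1 ≤ k) (hkn : k ≤ n)
    (g : Fin n → Fin k) (hg : Function.Surjective g)
    (H : Matrix (Fin n) (Fin k) ℝ)
    (hH : H = Matrix.of fun i j => if g i = j then (1 : ℝ) else 0)
    (Hdag : Matrix (Fin k) (Fin n) ℝ) (hHdag : Hdag = (Hᵀ * H)⁻¹ * Hᵀ)
    (P : Matrix (Fin n) (Fin n) ℝ) (hP : P = 1 - H * Hdag)
    {Ω : Type*} [MeasurableSpace Ω] (μ : Measure Ω) [IsProbabilityMeasure μ]
    (U : Ω → Fin n → Fin (k - 1) → ℝ) (hUmeas : Measurable U)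
    (horth : ∀ᵐ ω ∂μ,
      (∀ a b : Fin (k - 1), ∑ i, U ω i a * U ω i b = if a = b then (1 : ℝ) else 0)
      ∧ (∀ a : Fin (k - 1), ∑ i, U ω i a = 0))
    (hinv : ∀ Q : Matrix (Fin n) (Fin n) ℝ, Qᵀ * Q = 1 →
      (Q.mulVec (fun _ => 1) = fun _ => 1) →
      Measure.map (fun ω => fun i j => ∑ l, Q i l * U ω l j) μ = Measure.map U μ) :
    ∫ ω, ((∑ i, (∑ l, P i l * (Real.sqrt n)⁻¹) ^ 2)
        + ∑ i, ∑ a : Fin (k - 1), (∑ l, P i l * U ω l a) ^ 2) ∂μ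
      = ((n : ℝ) - k) * ((k : ℝ) - 1) / ((n : ℝ) - 1) := by
  obtain ⟨hP1, hP2⟩ := proj_aux g hg H hH Hdag hHdag P hP
  have hn1 : 1 ≤ n := hk.trans hkn
  have hz : (∑ i, (∑ l, P i l * (Real.sqrt n)⁻¹) ^ 2) = 0 := by
    refine Finset.sum_eq_zero fun i _ => ?_
    rw [← Finset.sum_mul, hP1]; simp
  rw [hz]
  simp only [zero_add]
  rcases Nat.lt_or_ge n 2 with hn2 | hn2
  · have hn : n = 1 := by omega
    have hk1 : k = 1 := by omega
    subst hn hk1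
    simp
  have hUm : ∀ l a, Measurable fun ω => U ω l a := fun l a =>
    (measurable_pi_apply a).comp ((measurable_pi_apply l).comp hUmeas)
  have hb : ∀ l a, ∀ᵐ ω ∂μ, |U ω l a| ≤ 1 := by
    intro l a
    filter_upwards [horth] with ω hω
    have h1 := hω.1 a a
    simp only [if_true] at h1
    have h2 : U ω l a * U ω l a ≤ ∑ i, U ω i a * U ω i a :=
      Finset.single_le_sum (f := fun i => U ω i a * U ω i a)
        (fun i _ => mul_self_nonneg _) (Finset.mem_univ l)
    rw [abs_le]
    constructor <;> nlinarith
  have hint0 : ∀ l m a, Integrable (fun ω => U ω l a * U ω m a) μ := by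
    intro l m a
    refine Integrable.of_bound ((hUm l a).mul (hUm m a)).aestronglyMeasurable 1 ?_
    filter_upwards [hb l a, hb m a] with ω h1 h2
    rw [Real.norm_eq_abs, abs_mul]
    exact mul_le_one₀ h1 (abs_nonneg _) h2
  have hint : ∀ l m, Integrable (fun ω => ∑ a, U ω l a * U ω m a) μ := fun l m =>
    integrable_finsetSum _ fun a _ => hint0 l m a
  obtain ⟨M, hM⟩ : ∃ M : Fin n → Fin n → ℝ,
      ∀ l m, M l m = ∫ ω, ∑ a, U ω l a * U ω m a ∂μ := ⟨_, fun _ _ => rfl⟩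
  have hperm : ∀ (σ : Equiv.Perm (Fin n)) l m, M (σ l) (σ m) = M l m := by
    intro σ l m
    have hQ := hinv (Matrix.of fun i j => if σ i = j then (1:ℝ) else 0)
      (by
        ext i j
        rw [Matrix.mul_apply, ← Equiv.sum_comp σ.symm]
        simp [Matrix.one_apply, eq_comm])
      (by
        ext i
        simp [Matrix.mulVec, dotProduct])
    have hs : (fun ω => fun i j => ∑ l, (Matrix.of fun i j => if σ i = j then (1:ℝ) else 0) i l
        * U ω l j) = fun ω i j => U ω (σ i) j := by
      funext ω i j; simp
    rw [hs] at hQ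
    have hf : Measurable fun V : Fin n → Fin (k-1) → ℝ => ∑ a, V l a * V m a := by
      fun_prop
    have hm' : Measurable fun ω => fun i j => U ω (σ i) j := by fun_prop
    rw [hM, hM, ← integral_map (f := fun V : Fin n → Fin (k-1) → ℝ => ∑ a, V l a * V m a)
      hUmeas.aemeasurable hf.aestronglyMeasurable, ← hQ,
      integral_map hm'.aemeasurable hf.aestronglyMeasurable]
  have hrow : ∀ l, ∑ m, M l m = 0 := by
    intro l
    simp only [hM]
    rw [← integral_finsetSum _ fun m _ => hint l m]
    rw [integral_eq_zero_of_ae]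
    filter_upwards [horth] with ω hω
    rw [Finset.sum_comm]
    simp [← Finset.mul_sum, hω.2]
  have htr : ∑ l, M l l = (k : ℝ) - 1 := by
    simp only [hM]
    rw [← integral_finsetSum _ fun m _ => hint m m]
    have : (fun ω => ∑ l, ∑ a, U ω l a * U ω l a) =ᵐ[μ] fun _ => (k : ℝ) - 1 := by
      filter_upwards [horth] with ω hω
      rw [Finset.sum_comm]
      simp [hω.1, Nat.cast_sub hk]
    rw [integral_congr_ae this]; simp
  have hnn : (2:ℝ) ≤ n := by exact_mod_cast hn2
  have hdiag : ∀ l, M l l = ((k : ℝ) - 1) / n := by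
    intro l
    have : ∀ m, M m m = M l l := fun m => by
      simpa using hperm (Equiv.swap l m) l l
    simp only [this, Finset.sum_const, Finset.card_univ, Fintype.card_fin, nsmul_eq_mul] at htr
    rw [← htr]; field_simp
  have hoff : ∀ l m, l ≠ m → M l m = -(((k : ℝ) - 1) / n / ((n : ℝ) - 1)) := by
    intro l m hlm
    have h1 : ∀ m' ∈ Finset.univ.erase l, M l m' = M l m := by
      intro m' hm'
      have h2 := hperm (Equiv.swap m m') l m
      rwa [Equiv.swap_apply_left, Equiv.swap_apply_of_ne_of_ne hlm
        (Finset.ne_of_mem_erase hm').symm] at h2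
    have h3 := hrow l
    rw [← Finset.add_sum_erase _ _ (Finset.mem_univ l), Finset.sum_congr rfl h1, hdiag] at h3
    simp only [Finset.sum_const, Finset.card_erase_of_mem (Finset.mem_univ l), Finset.card_univ,
      Fintype.card_fin, nsmul_eq_mul, Nat.cast_sub hn1, Nat.cast_one] at h3
    have h4 : (n:ℝ) - 1 ≠ 0 := by linarith
    rw [← neg_div, eq_div_iff h4]
    linarith
  have hMf : ∀ l m, M l m = (if l = m then ((k:ℝ)-1)/((n:ℝ)-1) else 0)
      - ((k : ℝ) - 1) / n / ((n : ℝ) - 1) := by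
    intro l m
    split_ifs with h
    · subst h
      have h4 : (n:ℝ) - 1 ≠ 0 := by linarith
      rw [hdiag]; field_simp
    · rw [hoff l m h]; ring
  have hexp : ∀ ω, ∑ i, ∑ a : Fin (k - 1), (∑ l, P i l * U ω l a) ^ 2
      = ∑ i, ∑ l, ∑ m, P i l * P i m * ∑ a, U ω l a * U ω m a := by
    intro ω
    refine Finset.sum_congr rfl fun i _ => ?_
    simp only [sq, Finset.sum_mul_sum]
    simp only [Finset.mul_sum]
    rw [Finset.sum_comm]
    refine Finset.sum_congr rfl fun l _ => ?_
    rw [Finset.sum_comm]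
    refine Finset.sum_congr rfl fun m _ => Finset.sum_congr rfl fun a _ => ?_
    ring
  simp only [hexp]
  have hI : ∀ i l m, Integrable (fun ω => P i l * P i m * ∑ a, U ω l a * U ω m a) μ :=
    fun i l m => (hint l m).const_mul _
  rw [integral_finsetSum _ fun i _ => integrable_finsetSum _ fun l _ =>
    integrable_finsetSum _ fun m _ => hI i l m]
  have hstep : ∀ i, ∫ ω, ∑ l, ∑ m, P i l * P i m * ∑ a, U ω l a * U ω m a ∂μ
      = (∑ l, P i l ^ 2) * (((k:ℝ)-1)/((n:ℝ)-1)) := by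
    intro i
    rw [integral_finsetSum _ fun l _ => integrable_finsetSum _ fun m _ => hI i l m, Finset.sum_mul]
    refine Finset.sum_congr rfl fun l _ => ?_
    rw [integral_finsetSum _ fun m _ => hI i l m]
    simp only [integral_const_mul, ← hM, hMf, mul_sub, Finset.sum_sub_distrib]
    rw [← Finset.sum_mul, ← Finset.mul_sum, hP1]
    simp [sq]
  simp only [hstep]
  rw [← Finset.sum_mul, hP2]
  ring
end

section
/- Let H ∈ {0,1}^{n×k} be a partition indicator matrix, let a, b ≥ 0, let Ω = (a − b)·I_k + b·1 1ᵀ, and let E = H Ω Hᵀ be the expected adjacency matrix of the corresponding planted partition model. Let M ∈ {0,1}^{k×κ} be any partition indicator matrix merging the k groups into κ nonempty supergroups, and set H' = H M ∈ {0,1}^{n×κ}. Then H' is an externally equitable partition of E, i.e. L(E) H' = H' (H'† L(E) H') where L(E) = diag(E·1) − E. In particular, every coarsening of the planted partition is an EEP of E, so all ways of merging the groups are equivalent (degenerate hierarchy). -/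
open Matrix BigOperators

/-- Let `E = H Ω Hᵀ` be the expected adjacency matrix of a planted partition
model with affinity `Ω = (a−b)·I + b·𝟙𝟙ᵀ` and partition indicator `H`.  Then every coarsening
`H' = H M` of the planted partition (for any merging partition indicator `M`) is an externally
equitable partition of `E`: `L(E) H' = H' (H'† L(E) H')` — the hierarchy is degenerate. -/
theorem every_coarsening_of_planted_partition_is_EEP
    {n k κ : ℕ} (g : Fin n → Fin k) (hg : Function.Surjective g)
    (m : Fin k → Fin κ) (hm : Function.Surjective m)
    (a b : ℝ) (ha : 0 ≤ a) (hb : 0 ≤ b)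
    (H : Matrix (Fin n) (Fin k) ℝ)
    (hH : H = Matrix.of fun i j => if g i = j then (1 : ℝ) else 0)
    (M : Matrix (Fin k) (Fin κ) ℝ)
    (hM : M = Matrix.of fun r t => if m r = t then (1 : ℝ) else 0)
    (Om : Matrix (Fin k) (Fin k) ℝ)
    (hOm : Om = (a - b) • (1 : Matrix (Fin k) (Fin k) ℝ)
        + b • Matrix.of (fun _ _ : Fin k => (1 : ℝ)))
    (E : Matrix (Fin n) (Fin n) ℝ) (hE : E = H * Om * Hᵀ)
    (L : Matrix (Fin n) (Fin n) ℝ)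
    (hL : L = Matrix.diagonal (fun i => ∑ j, E i j) - E)
    (H' : Matrix (Fin n) (Fin κ) ℝ) (hH' : H' = H * M) :
    L * H' = H' * ((H'ᵀ * H')⁻¹ * H'ᵀ * L * H') := by
  have hH'e : H' = Matrix.of fun i t => if m (g i) = t then (1 : ℝ) else 0 := by
    ext i t
    simp only [hH', hH, hM, Matrix.mul_apply, Matrix.of_apply, ite_mul, one_mul, zero_mul,
      Finset.sum_ite_eq, Finset.mem_univ, if_true]
  have hEe : ∀ i j, E i j = if g i = g j then a else b := by
    intro i j
    have h1 : E i j = Om (g i) (g j) := by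
      simp [hE, hH, Matrix.mul_apply]
    rw [h1, hOm]
    by_cases h : g i = g j <;> simp [h, Matrix.one_apply]
  have hX : L * H' = H' * Matrix.of fun s t =>
      ∑ j, b * ((if s = t then (1 : ℝ) else 0) - if m (g j) = t then (1 : ℝ) else 0) := by
    ext i t
    have hl : (L * H') i t = ∑ j, E i j * (H' i t - H' j t) := by
      rw [hL, Matrix.sub_mul, Matrix.sub_apply, Matrix.diagonal_mul, Matrix.mul_apply,
        Finset.sum_mul, ← Finset.sum_sub_distrib]
      simp only [mul_sub]
    have hr : ∀ Y : Matrix (Fin κ) (Fin κ) ℝ, (H' * Y) i t = Y (m (g i)) t := by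
      intro Y
      simp [hH'e, Matrix.mul_apply]
    rw [hl, hr]
    simp only [Matrix.of_apply]
    refine Finset.sum_congr rfl fun j _ => ?_
    rw [hEe, hH'e]
    by_cases h : g i = g j <;> simp [h]
  have hD : H'ᵀ * H' = Matrix.diagonal fun t => ∑ i, if m (g i) = t then (1 : ℝ) else 0 := by
    ext s t
    rw [hH'e, Matrix.mul_apply, Matrix.diagonal_apply]
    split_ifs with h
    · subst h
      refine Finset.sum_congr rfl fun i _ => ?_
      by_cases h1 : m (g i) = s <;> simp [h1]
    · refine Finset.sum_eq_zero fun i _ => ?_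
      by_cases h1 : m (g i) = s
      · have : m (g i) ≠ t := fun h2 => h (h1.symm.trans h2)
        simp [this]
      · simp [h1]
  have hU : IsUnit (H'ᵀ * H').det := by
    rw [hD, Matrix.det_diagonal, isUnit_iff_ne_zero, Finset.prod_ne_zero_iff]
    intro t _
    obtain ⟨i, hi⟩ := (hm.comp hg) t
    refine ne_of_gt (Finset.sum_pos' (fun j _ => by split_ifs <;> norm_num)
      ⟨i, Finset.mem_univ _, ?_⟩)
    have : m (g i) = t := hi
    simp [this]
  rw [Matrix.mul_assoc _ L H', hX, Matrix.mul_assoc _ H'ᵀ, ← Matrix.mul_assoc H'ᵀ,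
    Matrix.nonsing_inv_mul_cancel_left _ _ hU]
end
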